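/- arXiv:2307.08402 — 2 statements merged into one kernel-verified Lean document; each statement's English description precedes it below -/
import Mathlib

section
/- Let p ∈ [1,∞), d > 1, and let μ, ν be probability measures on ℝ^d with finite p-th moments which share the same copula, i.e. there exists a d-copula C such that the joint distribution functions satisfy H_μ(x₁,…,x_d) = C(F₁(x₁),…,F_d(x_d)) and H_ν(y₁,…,y_d) = C(G₁(y₁),…,G_d(y_d)) for all x, y ∈ ℝ^d, where F_i and G_i are the marginal distribution functions of μ and ν. Then, with ℝ^d equipped with the p-norm, W_p(μ,ν)^p = ∫₀¹ Σ_{i=1}^d |F_i⁻¹(u) − G_i⁻¹(u)|^p du. -/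
/-!
The cost `∑ i, |x i - y i| ^ p` splits over the coordinates, so every coupling costs at least the
sum of the optimal costs of the one-dimensional marginals, and a common copula provides one coupling
that is optimal in all coordinates at once.

*Lower bound.* On the line, `((x - y)⁺) ^ p` is the area under `s ↦ p (x - s) ^ (p - 1)` over
`[y, x)`. A point `(s, v)` of the plane belongs to this region exactly when `x` lies in an upper set
depending on `(s, v)` and `y ≤ s`. By Tonelli the cost of a coupling is therefore an integral of
masses of products of an upper set and a lower set, and each of these masses is least for the
comonotone coupling `u ↦ (F⁻¹ u, G⁻¹ u)`.

*Upper bound.* The cell volumes of a copula `C` on a finite grid are nonnegative and telescope, so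
some discrete measure has distribution function `C` at any prescribed finite set of points. The
slabs `{v i < x i ≤ u i}` of such a measure show that `C` is Lipschitz, and then a weak limit of
these measures along growing finite sets has distribution function `C` everywhere. Its marginals are
uniform, and the coordinatewise quantile maps of `μ` and `ν` carry it to `μ` and `ν`: together they
form a coupling which is comonotone in each coordinate.
-/

open MeasureTheory ENNReal Set

/-- Generalized inverse (quantile function) of a distribution function `F`. -/
noncomputable def qinv (F : ℝ → ℝ) (u : ℝ) : ℝ := sInf {x : ℝ | u ≤ F x}

/-- `π` is a coupling of `μ` and `ν`. -/
def IsCoupling {α : Type*} [MeasurableSpace α] (π : MeasureTheory.Measure (α × α))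
    (μ ν : MeasureTheory.Measure α) : Prop :=
  π.map Prod.fst = μ ∧ π.map Prod.snd = ν

/-- A `d`-copula: grounded, `d`-increasing, with uniform margins. The `d`-increasing
condition is stated as nonnegativity of the alternating sum over the vertices of the
box `∏ i {a i, b i}`, the vertex with `v i = b i` exactly for `i ∈ s` carrying the
sign `(-1)^{#{i : v i = a i}} = (-1)^{d - #s}`. -/
def IsCopula (d : ℕ) (C : (Fin d → ℝ) → ℝ) : Prop :=
  (∀ u : Fin d → ℝ, (∀ i, u i ∈ Icc (0:ℝ) 1) → (∃ i, u i = 0) → C u = 0) ∧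
  (∀ a b : Fin d → ℝ, (∀ i, a i ∈ Icc (0:ℝ) 1) → (∀ i, b i ∈ Icc (0:ℝ) 1) →
    (∀ i, a i ≤ b i) →
    0 ≤ ∑ s : Finset (Fin d),
          (-1 : ℝ) ^ (d - s.card) * C (fun i => if i ∈ s then b i else a i)) ∧
  (∀ i : Fin d, ∀ t ∈ Icc (0:ℝ) 1, C (fun j => if j = i then t else 1) = t)

/-- The `p`-th power of the `p`-Wasserstein distance on `ℝ^d` with the `p`-norm. -/
noncomputable def WpPowD (d : ℕ) (p : ℝ) (μ ν : MeasureTheory.Measure (Fin d → ℝ)) : ℝ≥0∞ :=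
  ⨅ π ∈ {π : MeasureTheory.Measure ((Fin d → ℝ) × (Fin d → ℝ)) | IsCoupling π μ ν},
    ∫⁻ z, ENNReal.ofReal (∑ i, |z.1 i - z.2 i| ^ p) ∂π

open ProbabilityTheory Filter Topology
open scoped unitInterval

namespace IsCoupling

variable {α β : Type*} [MeasurableSpace α] [MeasurableSpace β] {π : Measure (α × α)}
  {μ ν : Measure α}

lemma isFiniteMeasure [IsFiniteMeasure μ] (hπ : IsCoupling π μ ν) : IsFiniteMeasure π := by
  have : IsFiniteMeasure (π.map Prod.fst) := hπ.1 ▸ inferInstance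
  exact Measure.isFiniteMeasure_of_map measurable_fst.aemeasurable

lemma map_swap (hπ : IsCoupling π μ ν) : IsCoupling (π.map Prod.swap) ν μ :=
  ⟨(Measure.map_map measurable_fst measurable_swap).trans hπ.2,
    (Measure.map_map measurable_snd measurable_swap).trans hπ.1⟩

lemma map_prodMap (hπ : IsCoupling π μ ν) {φ : α → β}
    (hφ : Measurable φ) : IsCoupling (π.map (Prod.map φ φ)) (μ.map φ) (ν.map φ) := by
  refine ⟨?_, ?_⟩
  · rw [Measure.map_map measurable_fst (hφ.prodMap hφ), ← hπ.1, Measure.map_map hφ measurable_fst]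
    rfl
  · rw [Measure.map_map measurable_snd (hφ.prodMap hφ), ← hπ.2, Measure.map_map hφ measurable_snd]
    rfl

end IsCoupling

/-! ### Comonotone couplings on the line -/

section Comonotone

variable {α β γ : Type*} [MeasurableSpace α] [MeasurableSpace β] [MeasurableSpace γ]
  [Preorder α] [Preorder β] [LinearOrder γ]

lemma measure_comonotone_prod_le {ρ : Measure γ} {s : Set γ} (hs : ∀ᵐ u ∂ρ, u ∈ s)
    {f : γ → α} {g : γ → β} (hf : AEMeasurable f ρ) (hg : AEMeasurable g ρ)
    (hfs : MonotoneOn f s) (hgs : MonotoneOn g s) {π : Measure (α × β)} [IsFiniteMeasure π]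
    (hπf : π.map Prod.fst = ρ.map f) (hπg : π.map Prod.snd = ρ.map g)
    {A : Set α} {B : Set β} (hA : MeasurableSet A) (hB : MeasurableSet B)
    (hAu : IsUpperSet A) (hBl : IsLowerSet B) :
    ρ.map (fun u => (f u, g u)) (A ×ˢ B) ≤ π (A ×ˢ B) := by
  have hmapA : ρ (f ⁻¹' Aᶜ) = π (Prod.fst ⁻¹' Aᶜ) := by
    rw [← Measure.map_apply_of_aemeasurable hf hA.compl, ← hπf,
      Measure.map_apply measurable_fst hA.compl]
  have hmapB : ρ (g ⁻¹' B) = π (Prod.snd ⁻¹' B) := by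
    rw [← Measure.map_apply_of_aemeasurable hg hB, ← hπg, Measure.map_apply measurable_snd hB]
  rw [Measure.map_apply_of_aemeasurable (hf.prodMk hg) (hA.prod hB)]
  by_cases hmeet : ∃ u₀ ∈ s, f u₀ ∈ A ∧ g u₀ ∈ B
  · obtain ⟨u₀, hu₀, hfu₀, hgu₀⟩ := hmeet
    have hnested : ∀ u ∈ s, f u ∉ A → g u ∈ B := fun u hu hfu =>
      hBl (hgs hu hu₀ (le_of_not_ge fun h => hfu (hAu (hfs hu₀ hu h) hfu₀))) hgu₀
    have hle : ρ ((fun u => (f u, g u)) ⁻¹' A ×ˢ B) + ρ (f ⁻¹' Aᶜ) ≤ ρ (g ⁻¹' B) := by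
      rw [← measure_union₀ (hf.nullMeasurable hA.compl)
        (Disjoint.aedisjoint (disjoint_left.2 fun u hu hu' => hu' hu.1))]
      refine measure_mono_ae ?_
      filter_upwards [hs] with u hu
      rintro (h | h)
      exacts [h.2, hnested u hu h]
    have hcover : π (Prod.snd ⁻¹' B) ≤ π (A ×ˢ B) + π (Prod.fst ⁻¹' Aᶜ) := by
      refine (measure_mono fun z hz => ?_).trans (measure_union_le _ _)
      by_cases h : z.1 ∈ A
      exacts [Or.inl ⟨h, hz⟩, Or.inr h]
    rw [hmapA, hmapB] at hle
    exact (ENNReal.add_le_add_iff_right (measure_ne_top π _)).1 (hle.trans hcover)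
  · refine (measure_eq_zero_iff_ae_notMem.2 ?_).trans_le zero_le
    filter_upwards [hs] with u hu h using hmeet ⟨u, hu, h⟩

end Comonotone

/-- The set of `x` such that the point `w` of the plane lies to the left of `x`, between the axis
and the graph of `s ↦ p (x - s) ^ (p - 1)`. For fixed `x`, such `w` with first coordinate at least
`y` fill the area `((x - y)⁺) ^ p`. -/
def costSection (p : ℝ) (w : ℝ × ℝ) : Set ℝ :=
  {x | w.1 < x ∧ 0 < w.2 ∧ w.2 < p * (x - w.1) ^ (p - 1)}

lemma isUpperSet_costSection {p : ℝ} (hp : 1 ≤ p) (w : ℝ × ℝ) :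
    IsUpperSet (costSection p w) := by
  rintro x x' hxx' ⟨hwx, hw, hwp⟩
  refine ⟨hwx.trans_le hxx', hw, hwp.trans_le ?_⟩
  gcongr

lemma measurableSet_costSection_prod (p : ℝ) :
    MeasurableSet {q : (ℝ × ℝ) × (ℝ × ℝ) | q.2 ∈ costSection p q.1 ×ˢ Iic q.1.1} := by
  simp only [costSection, mem_prod, mem_Iic, ofPred_and]
  refine .inter (.inter ?_ (.inter ?_ ?_)) (measurableSet_le (by fun_prop) (by fun_prop))
  all_goals exact measurableSet_lt (by fun_prop) (by fun_prop)

/-- Fundamental theorem of calculus, `((x - y)⁺) ^ p = ∫ s in y..x, p (x - s) ^ (p - 1)`, with the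
integral written as an area. -/
lemma volume_setOf_mem_costSection_prod {p : ℝ} (hp : 1 ≤ p) (z : ℝ × ℝ) :
    volume {w : ℝ × ℝ | z ∈ costSection p w ×ˢ Iic w.1}
      = ENNReal.ofReal (max (z.1 - z.2) 0 ^ p) := by
  obtain ⟨x, y⟩ := z
  have hset : {w : ℝ × ℝ | (x, y) ∈ costSection p w ×ˢ Iic w.1}
      = regionBetween (fun _ => 0) (fun s => p * (x - s) ^ (p - 1)) (Ico y x) := by
    ext w
    simp only [costSection, regionBetween, mem_prod, mem_ofPred_eq, mem_Iic, mem_Ico, mem_Ioo]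
    tauto
  rcases le_or_gt x y with hxy | hxy
  · rw [hset, Ico_eq_empty (not_lt.2 hxy), max_eq_right (by linarith),
      Real.zero_rpow (by linarith)]
    simp [regionBetween]
  have hcont : Continuous fun s : ℝ => p * (x - s) ^ (p - 1) :=
    continuous_const.mul ((continuous_const.sub continuous_id).rpow_const
      fun _ => Or.inr (by linarith))
  have hnonneg : ∀ s ∈ Ico y x, 0 ≤ p * (x - s) ^ (p - 1) := fun s hs =>
    mul_nonneg (by linarith) (Real.rpow_nonneg (sub_nonneg.2 hs.2.le) _)
  have hint : ∫ s in y..x, p * (x - s) ^ (p - 1) = (x - y) ^ p := by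
    rw [intervalIntegral.integral_const_mul,
      intervalIntegral.integral_comp_sub_left (fun s => s ^ (p - 1)) x, sub_self,
      integral_rpow (Or.inl (by linarith)), sub_add_cancel, Real.zero_rpow (by linarith)]
    field_simp
    ring
  rw [hset, Measure.volume_eq_prod,
    volume_regionBetween_eq_integral (integrableOn_const (by simp) (by simp))
      (hcont.continuousOn.integrableOn_Icc.mono_set Ico_subset_Icc_self) measurableSet_Ico hnonneg]
  simp only [Pi.sub_apply, sub_zero]
  rw [integral_Ico_eq_integral_Ioc, ← intervalIntegral.integral_of_le hxy.le, hint,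
    max_eq_left (sub_nonneg.2 hxy.le)]

lemma lintegral_max_sub_rpow {p : ℝ} (hp : 1 ≤ p) (π : Measure (ℝ × ℝ)) [SFinite π] :
    ∫⁻ z, ENNReal.ofReal (max (z.1 - z.2) 0 ^ p) ∂π
      = ∫⁻ w : ℝ × ℝ, π (costSection p w ×ˢ Iic w.1) := by
  calc _ = ∫⁻ z, volume {w : ℝ × ℝ | z ∈ costSection p w ×ˢ Iic w.1} ∂π :=
        lintegral_congr fun z => (volume_setOf_mem_costSection_prod hp z).symm
    _ = (volume.prod π) {q | q.2 ∈ costSection p q.1 ×ˢ Iic q.1.1} :=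
        (Measure.prod_apply_symm (measurableSet_costSection_prod p)).symm
    _ = _ := Measure.prod_apply (measurableSet_costSection_prod p)

lemma ofReal_abs_sub_rpow_eq_add {p : ℝ} (hp : p ≠ 0) (x y : ℝ) :
    ENNReal.ofReal (|x - y| ^ p)
      = ENNReal.ofReal (max (x - y) 0 ^ p) + ENNReal.ofReal (max (y - x) 0 ^ p) := by
  wlog hxy : y ≤ x generalizing x y
  · rw [abs_sub_comm, this y x (le_of_not_ge hxy), add_comm]
  rw [max_eq_left (sub_nonneg.2 hxy), max_eq_right (sub_nonpos.2 hxy), Real.zero_rpow hp,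
    abs_of_nonneg (sub_nonneg.2 hxy), ENNReal.ofReal_zero, add_zero]

section ComonotoneReal

variable {γ : Type*} [MeasurableSpace γ] [LinearOrder γ] {ρ : Measure γ} [IsFiniteMeasure ρ]
  {s : Set γ} {f g : γ → ℝ} {p : ℝ}

lemma lintegral_max_sub_rpow_comonotone_le (hp : 1 ≤ p) (hs : ∀ᵐ u ∂ρ, u ∈ s)
    (hf : AEMeasurable f ρ) (hg : AEMeasurable g ρ) (hfs : MonotoneOn f s) (hgs : MonotoneOn g s)
    {π : Measure (ℝ × ℝ)} (hπ : IsCoupling π (ρ.map f) (ρ.map g)) :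
    ∫⁻ u, ENNReal.ofReal (max (f u - g u) 0 ^ p) ∂ρ
      ≤ ∫⁻ z, ENNReal.ofReal (max (z.1 - z.2) 0 ^ p) ∂π := by
  have := hπ.isFiniteMeasure
  have hmap := lintegral_map' (μ := ρ) (f := fun z => ENNReal.ofReal (max (z.1 - z.2) 0 ^ p))
    (by fun_prop) (hf.prodMk hg)
  rw [← hmap, lintegral_max_sub_rpow hp, lintegral_max_sub_rpow hp]
  exact lintegral_mono fun w =>
    measure_comonotone_prod_le hs hf hg hfs hgs hπ.1 hπ.2
      (isUpperSet_costSection hp w).ordConnected.measurableSet measurableSet_Iic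
      (isUpperSet_costSection hp w) (isLowerSet_Iic _)

lemma lintegral_abs_sub_rpow_comonotone_le (hp : 1 ≤ p) (hs : ∀ᵐ u ∂ρ, u ∈ s)
    (hf : AEMeasurable f ρ) (hg : AEMeasurable g ρ) (hfs : MonotoneOn f s) (hgs : MonotoneOn g s)
    {π : Measure (ℝ × ℝ)} (hπ : IsCoupling π (ρ.map f) (ρ.map g)) :
    ∫⁻ u, ENNReal.ofReal (|f u - g u| ^ p) ∂ρ ≤ ∫⁻ z, ENNReal.ofReal (|z.1 - z.2| ^ p) ∂π := by
  simp only [ofReal_abs_sub_rpow_eq_add (zero_lt_one.trans_le hp).ne']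
  rw [lintegral_add_left' (by fun_prop), lintegral_add_left (by fun_prop)]
  refine add_le_add (lintegral_max_sub_rpow_comonotone_le hp hs hf hg hfs hgs hπ) ?_
  have hswap := lintegral_max_sub_rpow_comonotone_le hp hs hg hf hgs hfs hπ.map_swap
  rwa [lintegral_map (by fun_prop) measurable_swap] at hswap

end ComonotoneReal

/-! ### Quantile functions -/

section Quantile

variable (m : Measure ℝ)

lemma qinv_cdf_le_iff {u : ℝ} (hu : u ∈ Ioo (0 : ℝ) 1) (x : ℝ) :
    qinv (cdf m) u ≤ x ↔ u ≤ cdf m x := by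
  obtain ⟨a, ha⟩ : ∃ a, cdf m a < u := ((tendsto_cdf_atBot m).eventually_lt_const hu.1).exists
  obtain ⟨b, hb⟩ : ∃ b, u < cdf m b := ((tendsto_cdf_atTop m).eventually_const_lt hu.2).exists
  have hbdd : BddBelow {x | u ≤ cdf m x} :=
    ⟨a, fun y hy => le_of_not_gt fun h => (ha.trans_le hy).not_ge (monotone_cdf m h.le)⟩
  refine ⟨fun h => ?_, fun h => csInf_le hbdd h⟩
  have hright : Tendsto (cdf m) (𝓝[>] x) (𝓝 (cdf m x)) :=
    ((cdf m).right_continuous x).mono_left (nhdsWithin_mono _ Ioi_subset_Ici_self)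
  refine ge_of_tendsto hright ?_
  filter_upwards [self_mem_nhdsWithin] with y hy
  obtain ⟨z, hz, hzy⟩ := exists_lt_of_csInf_lt ⟨b, hb.le⟩ (h.trans_lt hy)
  exact hz.trans (monotone_cdf m hzy.le)

lemma monotoneOn_qinv_cdf : MonotoneOn (qinv (cdf m)) (Ioo 0 1) := fun u hu v hv huv => by
  rw [qinv_cdf_le_iff m hu]
  exact huv.trans ((qinv_cdf_le_iff m hv _).1 le_rfl)

lemma aemeasurable_qinv_cdf : AEMeasurable (qinv (cdf m)) (volume.restrict (Ioo 0 1)) :=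
  aemeasurable_restrict_of_monotoneOn measurableSet_Ioo (monotoneOn_qinv_cdf m)

lemma map_qinv_cdf [IsProbabilityMeasure m] :
    (volume.restrict (Ioo (0 : ℝ) 1)).map (qinv (cdf m)) = m := by
  refine Measure.ext_of_Iic _ _ fun x => ?_
  have hpre : qinv (cdf m) ⁻¹' Iic x =ᵐ[volume.restrict (Ioo (0 : ℝ) 1)] Iic (cdf m x) := by
    filter_upwards [ae_restrict_mem measurableSet_Ioo] with u hu
    exact propext (qinv_cdf_le_iff m hu x)
  rw [Measure.map_apply_of_aemeasurable (aemeasurable_qinv_cdf m) measurableSet_Iic,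
    measure_congr hpre, restrict_Ioo_eq_restrict_Ioc, Measure.restrict_apply measurableSet_Iic,
    inter_comm, Ioc_inter_Iic, min_eq_right (cdf_le_one m x), Real.volume_Ioc, sub_zero,
    ofReal_cdf]

end Quantile

/-! ### Box volumes -/

section BoxVolume

variable {ι α : Type*} [Fintype ι] [DecidableEq ι]

/-- The `f`-volume of the box `[a, b]`: the alternating sum of `f` over the vertices, where the
vertex with coordinates `b i` for `i ∈ s` and `a i` for `i ∉ s` has sign `(-1) ^ #sᶜ`. -/
def boxVolume (f : (ι → α) → ℝ) (a b : ι → α) : ℝ :=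
  ∑ s : Finset ι, (-1) ^ sᶜ.card * f (s.piecewise b a)

lemma boxVolume_comp {β : Type*} (f : (ι → β) → ℝ) (g : α → β) (a b : ι → α) :
    boxVolume (fun x => f (g ∘ x)) a b = boxVolume f (g ∘ a) (g ∘ b) := by
  have hg (s : Finset ι) : g ∘ s.piecewise b a = s.piecewise (g ∘ b) (g ∘ a) := by
    ext i
    exact apply_ite g _ _ _
  simp only [boxVolume, hg]

lemma boxVolume_congr {f g : (ι → α) → ℝ} {a b : ι → α}
    (h : ∀ s : Finset ι, f (s.piecewise b a) = g (s.piecewise b a)) :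
    boxVolume f a b = boxVolume g a b := by
  simp only [boxVolume, h]

lemma boxVolume_sum_mul {κ : Type*} (t : Finset κ) (c : κ → ℝ) (f : κ → (ι → α) → ℝ)
    (a b : ι → α) :
    boxVolume (fun x => ∑ m ∈ t, c m * f m x) a b = ∑ m ∈ t, c m * boxVolume (f m) a b := by
  simp only [boxVolume, Finset.mul_sum]
  rw [Finset.sum_comm]
  simp only [mul_left_comm]

lemma boxVolume_prod (φ : ι → α → ℝ) (a b : ι → α) :
    boxVolume (fun x => ∏ i, φ i (x i)) a b = ∏ i, (φ i (b i) - φ i (a i)) := by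
  simp only [sub_eq_add_neg, Finset.prod_add, Finset.powerset_univ, boxVolume]
  refine Finset.sum_congr rfl fun s _ => ?_
  rw [Finset.prod_neg, ← Finset.compl_eq_univ_sdiff, mul_left_comm,
    ← Finset.prod_mul_prod_compl s]
  congr 2
  · exact Finset.prod_congr rfl fun i hi => by rw [Finset.piecewise_eq_of_mem _ _ _ hi]
  · exact Finset.prod_congr rfl fun i hi => by
      rw [Finset.piecewise_eq_of_notMem _ _ _ (Finset.mem_compl.1 hi)]

lemma boxVolume_eq_of_grounded {f : (ι → α) → ℝ} {a : ι → α}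
    (hf : ∀ x, (∃ i, x i = a i) → f x = 0) (b : ι → α) : boxVolume f a b = f b := by
  rw [boxVolume, Finset.sum_eq_single_of_mem Finset.univ (Finset.mem_univ _)]
  · simp
  · intro s _ hs
    obtain ⟨i, hi⟩ : ∃ i, i ∉ s := by simpa [Finset.eq_univ_iff_forall] using hs
    rw [hf _ ⟨i, Finset.piecewise_eq_of_notMem _ _ _ hi⟩, mul_zero]

/-- Both sides are linear in `f`, and on the box `f` is a linear combination of products of
one-variable functions, for which the sum factorizes into telescoping sums. -/
lemma sum_boxVolume_unit_cells (f : (ι → ℕ) → ℝ) (n : ι → ℕ) :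
    ∑ k ∈ Fintype.piFinset (fun i => Finset.range (n i)), boxVolume f k (k + 1)
      = boxVolume f 0 n := by
  let δ (m : ι → ℕ) (i : ι) (j : ℕ) : ℝ := if j = m i then 1 else 0
  have hδ : ∀ x ≤ n, f x = ∑ m ∈ Finset.Iic n, f m * ∏ i, δ m i (x i) := fun x hx => by
    simp [δ, Fintype.prod_boole, ← funext_iff, hx]
  have hexpand : ∀ a ≤ n, ∀ b ≤ n,
      boxVolume f a b = ∑ m ∈ Finset.Iic n, f m * ∏ i, (δ m i (b i) - δ m i (a i)) := by
    intro a ha b hb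
    calc boxVolume f a b
        = boxVolume (fun x => ∑ m ∈ Finset.Iic n, f m * ∏ i, δ m i (x i)) a b :=
          boxVolume_congr fun s => hδ _ (Finset.piecewise_le_of_le_of_le s hb ha)
      _ = _ := by simp only [boxVolume_sum_mul, boxVolume_prod]
  have hcell : ∀ k ∈ Fintype.piFinset (fun i => Finset.range (n i)), boxVolume f k (k + 1)
      = ∑ m ∈ Finset.Iic n, f m * ∏ i, (δ m i (k i + 1) - δ m i (k i)) := fun k hk => by
    have hk' : ∀ i, k i < n i := by simpa using hk
    exact hexpand k (fun i => (hk' i).le) (k + 1) hk'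
  rw [Finset.sum_congr rfl hcell, Finset.sum_comm, hexpand 0 zero_le n le_rfl]
  refine Finset.sum_congr rfl fun m _ => ?_
  rw [← Finset.mul_sum,
    ← Finset.prod_univ_sum (fun i => Finset.range (n i)) (fun i j => δ m i (j + 1) - δ m i j)]
  simp only [Finset.sum_range_sub, Pi.zero_apply]

end BoxVolume

/-! ### The probability measure of a copula -/

section Copula

variable {d : ℕ} {C : (Fin d → ℝ) → ℝ}

namespace IsCopula

lemma apply_eq_zero (hC : IsCopula d C) {u : Fin d → I} (hu : ∃ i, u i = 0) :
    C (fun i => u i) = 0 :=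
  hC.1 _ (fun i => (u i).2) (hu.imp fun _ hi => by rw [hi]; rfl)

lemma apply_update_one (hC : IsCopula d C) (i : Fin d) (t : I) :
    C (fun j => (Function.update (1 : Fin d → I) i t j : I)) = t := by
  rw [← hC.2.2 i t t.2]
  congr 1
  ext j
  by_cases hj : j = i <;> simp [hj]

lemma apply_one (hC : IsCopula d C) (hd : d ≠ 0) : C 1 = 1 := by
  rw [← hC.2.2 ⟨0, Nat.pos_of_ne_zero hd⟩ 1 ⟨zero_le_one, le_rfl⟩]
  simp only [ite_self]
  rfl

lemma boxVolume_nonneg (hC : IsCopula d C) {a b : Fin d → I} (hab : a ≤ b) :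
    0 ≤ boxVolume (fun u : Fin d → I => C fun i => u i) a b := by
  refine (hC.2.1 (fun i => a i) (fun i => b i) (fun i => (a i).2) (fun i => (b i).2) hab).trans_eq
    (Finset.sum_congr rfl fun s _ => ?_)
  rw [Finset.card_compl, Fintype.card_fin]
  congr 2
  ext i
  exact (apply_ite _ _ _ _).symm

lemma exists_measure_Iic_eq_on_grid (hC : IsCopula d C) {g : ℕ → I} {N : ℕ}
    (hg : StrictMonoOn g (Iic N)) (hg0 : g 0 = 0) :
    ∃ Q : Measure (Fin d → I), ∀ n : Fin d → ℕ, (∀ i, n i ≤ N) →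
      Q (Iic (g ∘ n)) = ENNReal.ofReal (C fun i => g (n i)) := by
  let cells (n : Fin d → ℕ) := Fintype.piFinset fun i => Finset.range (n i)
  let mass (k : Fin d → ℕ) := boxVolume (fun n : Fin d → ℕ => C fun i => g (n i)) k (k + 1)
  refine ⟨∑ k ∈ cells fun _ => N, ENNReal.ofReal (mass k) • Measure.dirac (g ∘ (k + 1)),
    fun n hn => ?_⟩
  have hlt {k : Fin d → ℕ} (hk : k ∈ cells fun _ => N) (i : Fin d) : k i < N := by
    simpa using Fintype.mem_piFinset.1 hk i
  have hsub : cells n ⊆ cells fun _ => N :=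
    Fintype.piFinset_subset _ _ fun i => Finset.range_subset_range.2 (hn i)
  have hmass : ∀ k ∈ cells fun _ => N, 0 ≤ mass k := fun k hk => by
    have := hC.boxVolume_nonneg (a := g ∘ k) (b := g ∘ (k + 1)) fun i =>
      hg.monotoneOn (hlt hk i).le (hlt hk i) (Nat.le_succ _)
    rwa [← boxVolume_comp] at this
  have hdirac : ∀ k ∈ cells fun _ => N,
      Measure.dirac (g ∘ (k + 1)) (Iic (g ∘ n)) = if k ∈ cells n then 1 else 0 := fun k hk => by
    have hiff : g ∘ (k + 1) ∈ Iic (g ∘ n) ↔ k ∈ cells n := by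
      simp only [cells, mem_Iic, Pi.le_def, Function.comp_apply, Fintype.mem_piFinset,
        Finset.mem_range]
      exact forall_congr' fun i => hg.le_iff_le (hlt hk i) (hn i)
    simp only [Measure.dirac_apply' _ measurableSet_Iic, indicator, hiff, Pi.one_apply]
  have hgrounded : ∀ m : Fin d → ℕ, (∃ i, m i = (0 : Fin d → ℕ) i) → C (fun i => g (m i)) = 0 := by
    rintro m ⟨i, hi⟩
    exact hC.apply_eq_zero ⟨i, by rw [hi, Pi.zero_apply, hg0]⟩
  calc _ = ∑ k ∈ cells fun _ => N, ENNReal.ofReal (mass k) * if k ∈ cells n then 1 else 0 := by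
        rw [Measure.finsetSum_apply]
        exact Finset.sum_congr rfl fun k hk => by rw [Measure.smul_apply, smul_eq_mul, hdirac k hk]
    _ = ∑ k ∈ cells n, ENNReal.ofReal (mass k) := by
        simp only [mul_ite, mul_one, mul_zero, Finset.sum_ite_mem, Finset.inter_eq_right.2 hsub]
    _ = ENNReal.ofReal (∑ k ∈ cells n, mass k) :=
        (ENNReal.ofReal_sum_of_nonneg fun k hk => hmass k (hsub hk)).symm
    _ = _ := by rw [sum_boxVolume_unit_cells, boxVolume_eq_of_grounded hgrounded]

lemma exists_measure_Iic_eq_on_finset (hC : IsCopula d C) (S : Finset (Fin d → I)) :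
    ∃ Q : Measure (Fin d → I), ∀ u ∈ S, Q (Iic u) = ENNReal.ofReal (C fun i => u i) := by
  let T : Finset I := insert 0 (S.biUnion fun u => Finset.univ.image u)
  obtain ⟨N, hN⟩ : ∃ N, T.card = N + 1 :=
    Nat.exists_eq_succ_of_ne_zero (Finset.card_ne_zero_of_mem (Finset.mem_insert_self _ _))
  let g (j : ℕ) : I := T.orderEmbOfFin hN (Fin.ofNat (N + 1) j)
  have hg : StrictMonoOn g (Iic N) := fun j hj k hk hjk => by
    refine (T.orderEmbOfFin hN).strictMono (Fin.lt_def.2 ?_)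
    rwa [Fin.val_ofNat, Fin.val_ofNat, Nat.mod_eq_of_lt (Nat.lt_succ_of_le hj),
      Nat.mod_eq_of_lt (Nat.lt_succ_of_le hk)]
  have hsurj : ∀ t ∈ T, ∃ j ≤ N, g j = t := fun t ht => by
    obtain ⟨j, rfl⟩ : t ∈ range (T.orderEmbOfFin hN) := by rwa [Finset.range_orderEmbOfFin]
    exact ⟨j, Nat.lt_succ_iff.1 j.2, by simp [g]⟩
  have hg0 : g 0 = 0 := by
    obtain ⟨j, hj, hj0⟩ := hsurj 0 (Finset.mem_insert_self _ _)
    exact le_antisymm (hj0 ▸ hg.monotoneOn (mem_Iic.2 zero_le) hj zero_le) zero_le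
  obtain ⟨Q, hQ⟩ := hC.exists_measure_Iic_eq_on_grid hg hg0
  refine ⟨Q, fun u hu => ?_⟩
  have huT (i : Fin d) : u i ∈ T := Finset.mem_insert_of_mem
    (Finset.mem_biUnion.2 ⟨u, hu, Finset.mem_image_of_mem u (Finset.mem_univ i)⟩)
  choose n hn hgn using fun i => hsurj (u i) (huT i)
  obtain rfl : g ∘ n = u := funext hgn
  exact hQ n hn

lemma ofReal_apply_le_add_sum (hC : IsCopula d C) (u v : Fin d → I) :
    ENNReal.ofReal (C fun i => u i)
      ≤ ENNReal.ofReal (C fun i => v i) + ∑ i, ENNReal.ofReal (u i - v i) := by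
  let slab (i : Fin d) (t : I) : Fin d → I := Function.update 1 i t
  obtain ⟨Q, hQ⟩ := hC.exists_measure_Iic_eq_on_finset
    ({u, v} ∪ Finset.univ.image (fun i => slab i (u i)) ∪
      Finset.univ.image fun i => slab i (v i))
  have hslab {i : Fin d} {t : I} (ht : t = u i ∨ t = v i) :
      Q (Iic (slab i t)) = ENNReal.ofReal t := by
    rw [hQ, hC.apply_update_one]
    rcases ht with rfl | rfl <;> simp
  have hcover : Iic u ⊆ Iic v ∪ ⋃ i, Iic (slab i (u i)) \ Iic (slab i (v i)) := fun x hx => by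
    by_cases hxv : x ≤ v
    · exact Or.inl hxv
    obtain ⟨i, hi⟩ := not_forall.1 hxv
    exact Or.inr (mem_iUnion.2 ⟨i, le_update_iff.2 ⟨hx i, fun _ _ => unitInterval.le_one'⟩,
      fun h => hi (le_update_iff.1 h).1⟩)
  have hdiff (i : Fin d) :
      Q (Iic (slab i (u i)) \ Iic (slab i (v i))) ≤ ENNReal.ofReal (u i - v i) := by
    have hslabs {s t : I} (hst : s ≤ t) : Iic (slab i s) ⊆ Iic (slab i t) :=
      Iic_subset_Iic.2 (Function.update_mono hst)
    rcases le_total (u i) (v i) with huv | huv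
    · rw [sdiff_eq_empty.2 (hslabs huv), measure_empty]
      exact zero_le
    · rw [measure_sdiff (hslabs huv) measurableSet_Iic.nullMeasurableSet
        (by rw [hslab (.inr rfl)]; exact ENNReal.ofReal_ne_top), hslab (.inl rfl),
        hslab (.inr rfl), ENNReal.ofReal_sub _ (v i).2.1]
  calc _ = Q (Iic u) := (hQ u (by simp)).symm
    _ ≤ Q (Iic v) + ∑ i, Q (Iic (slab i (u i)) \ Iic (slab i (v i))) :=
        (measure_mono hcover).trans ((measure_union_le _ _).trans
          (by gcongr; exact measure_iUnion_fintype_le _ _))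
    _ ≤ _ := by
        rw [hQ v (by simp)]
        gcongr with i
        exact hdiff i

end IsCopula

/-- `P` is the law on the cube `[0, 1]^d` whose joint distribution function is `C`. The cube is
modelled on the type `unitInterval`, whose compactness yields the existence of `P`. -/
def IsCopulaLaw (C : (Fin d → ℝ) → ℝ) (P : Measure (Fin d → I)) : Prop :=
  ∀ u : Fin d → I, P (Iic u) = ENNReal.ofReal (C fun i => u i)

namespace IsCopula

section Limit

variable {κ : Type*} {L : Filter κ} [L.NeBot] {Q : κ → ProbabilityMeasure (Fin d → I)}
  {P : ProbabilityMeasure (Fin d → I)}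

lemma measure_Iic_le_add_of_tendsto (hC : IsCopula d C) (hQP : Tendsto Q L (𝓝 P))
    (hQ : ∀ u : Fin d → I, Tendsto (fun k => (Q k : Measure (Fin d → I)) (Iic u)) L
      (𝓝 (ENNReal.ofReal (C fun i => u i))))
    (u : Fin d → I) {ε : ℝ} (hε : 0 < ε) :
    (P : Measure (Fin d → I)) (Iic u)
      ≤ ENNReal.ofReal (C fun i => u i) + d * ENNReal.ofReal ε := by
  let U : Set (Fin d → I) := univ.pi fun i => {t | (t : ℝ) < u i + ε}
  let v (i : Fin d) : I := projIcc 0 1 zero_le_one (u i + ε)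
  have hU : IsOpen U :=
    isOpen_set_pi finite_univ fun i _ => isOpen_lt continuous_subtype_val continuous_const
  have huU : Iic u ⊆ U := fun x hx i _ =>
    (Subtype.coe_le_coe.2 (hx i)).trans_lt (lt_add_of_pos_right _ hε)
  have hUv : U ⊆ Iic v := fun x hx i =>
    (projIcc_val zero_le_one (x i)).ge.trans (monotone_projIcc _ (hx i (mem_univ i)).le)
  have hvu (i : Fin d) : (v i : ℝ) - u i ≤ ε := by
    rw [sub_le_iff_le_add', coe_projIcc]
    exact max_le (add_nonneg (u i).2.1 hε.le) (min_le_right _ _)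
  calc (P : Measure (Fin d → I)) (Iic u) ≤ (P : Measure (Fin d → I)) U := measure_mono huU
    _ ≤ L.liminf fun k => (Q k : Measure (Fin d → I)) U :=
        ProbabilityMeasure.le_liminf_measure_open_of_tendsto hQP hU
    _ ≤ L.liminf fun k => (Q k : Measure (Fin d → I)) (Iic v) :=
        liminf_le_liminf (Eventually.of_forall fun _ => measure_mono hUv)
    _ = ENNReal.ofReal (C fun i => v i) := (hQ v).liminf_eq
    _ ≤ ENNReal.ofReal (C fun i => u i) + ∑ i, ENNReal.ofReal (v i - u i) :=
        hC.ofReal_apply_le_add_sum v u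
    _ ≤ ENNReal.ofReal (C fun i => u i) + ∑ _i : Fin d, ENNReal.ofReal ε := by
        gcongr with i
        exact hvu i
    _ = _ := by rw [Finset.sum_const, Finset.card_fin, nsmul_eq_mul]

lemma isCopulaLaw_of_tendsto (hC : IsCopula d C) (hQP : Tendsto Q L (𝓝 P))
    (hQ : ∀ u : Fin d → I, Tendsto (fun k => (Q k : Measure (Fin d → I)) (Iic u)) L
      (𝓝 (ENNReal.ofReal (C fun i => u i)))) :
    IsCopulaLaw C (P : Measure (Fin d → I)) := fun u => by
  refine le_antisymm ?_ ?_
  · have hlim : Tendsto (fun ε => ENNReal.ofReal (C fun i => u i) + d * ENNReal.ofReal ε)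
        (𝓝[>] 0) (𝓝 (ENNReal.ofReal (C fun i => u i))) := by
      have : Continuous fun ε : ℝ => ENNReal.ofReal (C fun i => u i) + d * ENNReal.ofReal ε :=
        continuous_const.add ((ENNReal.continuous_const_mul (ENNReal.natCast_ne_top d)).comp
          ENNReal.continuous_ofReal)
      simpa using (this.tendsto 0).mono_left nhdsWithin_le_nhds
    refine ge_of_tendsto hlim ?_
    filter_upwards [self_mem_nhdsWithin] with ε hε
    exact hC.measure_Iic_le_add_of_tendsto hQP hQ u hε
  · rw [← (hQ u).limsup_eq]
    exact ProbabilityMeasure.limsup_measure_closed_le_of_tendsto hQP isClosed_Iic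

end Limit

lemma exists_isCopulaLaw (hC : IsCopula d C) (hd : d ≠ 0) :
    ∃ P : Measure (Fin d → I), IsCopulaLaw C P := by
  have hfin (S : Finset (Fin d → I)) : ∃ Q : ProbabilityMeasure (Fin d → I), ∀ u ∈ S,
      (Q : Measure (Fin d → I)) (Iic u) = ENNReal.ofReal (C fun i => u i) := by
    obtain ⟨Q, hQ⟩ := hC.exists_measure_Iic_eq_on_finset (insert 1 S)
    have hQ1 : Q univ = 1 := by
      have huniv : Iic (1 : Fin d → I) = univ := eq_univ_of_forall fun _ _ => unitInterval.le_one'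
      rw [← huniv, hQ 1 (Finset.mem_insert_self _ _)]
      exact (congrArg ENNReal.ofReal (hC.apply_one hd)).trans ENNReal.ofReal_one
    exact ⟨⟨Q, ⟨hQ1⟩⟩, fun u hu => hQ u (Finset.mem_insert_of_mem hu)⟩
  choose Q hQ using hfin
  let L := Ultrafilter.of (atTop : Filter (Finset (Fin d → I)))
  obtain ⟨P, -, hP⟩ := isCompact_univ.ultrafilter_le_nhds (L.map Q) (by simp)
  have hlim : Tendsto Q L (𝓝 P) := hP
  refine ⟨P, hC.isCopulaLaw_of_tendsto hlim fun u => tendsto_const_nhds.congr' ?_⟩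
  filter_upwards [Ultrafilter.of_le atTop (Ici_mem_atTop {u})] with S hS
  exact (hQ S u (Finset.singleton_subset_iff.1 hS)).symm

end IsCopula

namespace IsCopulaLaw

variable {P : Measure (Fin d → I)}

lemma map_eval (hP : IsCopulaLaw C P) (hC : IsCopula d C) (i : Fin d) :
    P.map (Function.eval i) = volume := by
  refine (Measure.ext_of_Iic _ _ fun t => ?_).symm
  have hpre : Function.eval i ⁻¹' Iic t = Iic (Function.update (1 : Fin d → I) i t) := by
    ext x
    simp only [mem_preimage, Function.eval, mem_Iic, le_update_iff]
    exact (and_iff_left fun _ _ => unitInterval.le_one').symm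
  rw [unitInterval.volume_Iic, Measure.map_apply (measurable_pi_apply i) measurableSet_Iic, hpre,
    hP, hC.apply_update_one]

lemma measurePreserving_coe_eval (hP : IsCopulaLaw C P) (hC : IsCopula d C) (i : Fin d) :
    MeasurePreserving (fun u : Fin d → I => (u i : ℝ)) P (volume.restrict (Ioo 0 1)) := by
  rw [restrict_Ioo_eq_restrict_Icc]
  exact unitInterval.measurePreserving_coe.comp ⟨measurable_pi_apply i, hP.map_eval hC i⟩

end IsCopulaLaw

end Copula

/-! ### Measures with a given copula -/

lemma ext_of_Iic_pi {ι : Type*} [Finite ι] (μ ν : Measure (ι → ℝ)) [IsFiniteMeasure μ]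
    (h : ∀ x, μ (Iic x) = ν (Iic x)) : μ = ν := by
  have hspan : ∀ _ : ι, IsCountablySpanning (range (Iic : ℝ → Set ℝ)) := fun _ =>
    ⟨fun n : ℕ => Iic (n : ℝ), fun n => ⟨_, rfl⟩, iUnion_eq_univ_iff.2 exists_nat_ge⟩
  have hgen := generateFrom_eq_pi (α := fun _ : ι => ℝ) (C := fun _ => range (Iic : ℝ → Set ℝ))
    (fun _ => by rw [← borel_eq_generateFrom_Iic, ← BorelSpace.measurable_eq]) hspan
  refine Measure.ext_of_generateFrom_of_iUnion _ (fun n : ℕ => Iic fun _ => (n : ℝ)) hgen.symm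
    (IsPiSystem.pi fun _ => isPiSystem_Iic) ?_ ?_ (fun n => measure_ne_top μ _) ?_
  · refine iUnion_eq_univ_iff.2 fun x => ?_
    obtain ⟨M, hM⟩ := (finite_range x).bddAbove
    obtain ⟨n, hn⟩ := exists_nat_ge M
    exact ⟨n, fun i => (hM (mem_range_self i)).trans hn⟩
  · exact fun n => ⟨fun _ => Iic (n : ℝ), fun _ _ => mem_range_self _, pi_univ_Iic _⟩
  · rintro _ ⟨s, hs, rfl⟩
    choose x hx using fun i => hs i (mem_univ i)
    obtain rfl : (fun i => Iic (x i)) = s := funext hx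
    rw [pi_univ_Iic]
    exact h x

section HasCopula

variable {d : ℕ} {C : (Fin d → ℝ) → ℝ} {P : Measure (Fin d → I)} {μ ν : Measure (Fin d → ℝ)}

/-- The joint distribution function of `μ` is `C` evaluated at its marginal distribution functions
(the relation in Sklar's theorem). -/
def HasCopula (μ : Measure (Fin d → ℝ)) (C : (Fin d → ℝ) → ℝ) : Prop :=
  ∀ x, μ.real (Iic x) = C fun i => cdf (μ.map (Function.eval i)) (x i)

/-- The map applying to each coordinate the quantile function of the corresponding marginal
of `μ`. -/
noncomputable def quantileMap (μ : Measure (Fin d → ℝ)) (u : Fin d → I) (i : Fin d) : ℝ :=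
  qinv (cdf (μ.map (Function.eval i))) (u i)

lemma isProbabilityMeasure_map_eval [IsProbabilityMeasure μ] (i : Fin d) :
    IsProbabilityMeasure (μ.map (Function.eval i)) :=
  Measure.isProbabilityMeasure_map (measurable_pi_apply i).aemeasurable

lemma IsCopulaLaw.aemeasurable_quantileMap (hP : IsCopulaLaw C P) (hC : IsCopula d C)
    (μ : Measure (Fin d → ℝ)) : AEMeasurable (quantileMap μ) P :=
  aemeasurable_pi_lambda _ fun i => (aemeasurable_qinv_cdf _).comp_quasiMeasurePreserving
    (hP.measurePreserving_coe_eval hC i).quasiMeasurePreserving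

lemma HasCopula.map_quantileMap [IsFiniteMeasure μ] (hμ : HasCopula μ C) (hP : IsCopulaLaw C P)
    (hC : IsCopula d C) : P.map (quantileMap μ) = μ := by
  refine (ext_of_Iic_pi _ _ fun x => ?_).symm
  let u (i : Fin d) : I :=
    ⟨cdf (μ.map (Function.eval i)) (x i), cdf_nonneg _ _, cdf_le_one _ _⟩
  have hmem : ∀ᵐ w ∂P, ∀ i, (w i : ℝ) ∈ Ioo (0 : ℝ) 1 := ae_all_iff.2 fun i =>
    (hP.measurePreserving_coe_eval hC i).quasiMeasurePreserving.ae
      (ae_restrict_mem measurableSet_Ioo)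
  have hpre : quantileMap μ ⁻¹' Iic x =ᵐ[P] Iic u := by
    filter_upwards [hmem] with w hw
    exact propext (forall_congr' fun i => qinv_cdf_le_iff _ (hw i) (x i))
  rw [Measure.map_apply_of_aemeasurable (hP.aemeasurable_quantileMap hC μ) measurableSet_Iic,
    measure_congr hpre, hP u, ← hμ x, ofReal_measureReal]

end HasCopula

/-! ### The Wasserstein cost -/

lemma lintegral_ofReal_sum_abs_sub_rpow {Ω ι : Type*} [MeasurableSpace Ω] [Fintype ι]
    {m : Measure Ω} {f g : Ω → ι → ℝ} (hf : ∀ i, AEMeasurable (fun ω => f ω i) m)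
    (hg : ∀ i, AEMeasurable (fun ω => g ω i) m) (p : ℝ) :
    ∫⁻ ω, ENNReal.ofReal (∑ i, |f ω i - g ω i| ^ p) ∂m
      = ∑ i, ∫⁻ ω, ENNReal.ofReal (|f ω i - g ω i| ^ p) ∂m := by
  rw [← lintegral_finsetSum' _ fun i _ => by have := hf i; have := hg i; fun_prop]
  exact lintegral_congr fun ω => ENNReal.ofReal_sum_of_nonneg fun i _ => by positivity

section Cost

variable {d : ℕ} {p : ℝ} {μ ν : Measure (Fin d → ℝ)}

lemma lintegral_sum_abs_sub_qinv_rpow_le [IsProbabilityMeasure μ] [IsProbabilityMeasure ν]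
    (hp : 1 ≤ p) {π : Measure ((Fin d → ℝ) × (Fin d → ℝ))} (hπ : IsCoupling π μ ν) :
    ∫⁻ u in Ioo (0 : ℝ) 1, ENNReal.ofReal (∑ i, |qinv (cdf (μ.map (Function.eval i))) u
        - qinv (cdf (ν.map (Function.eval i))) u| ^ p)
      ≤ ∫⁻ z, ENNReal.ofReal (∑ i, |z.1 i - z.2 i| ^ p) ∂π := by
  rw [lintegral_ofReal_sum_abs_sub_rpow (fun _ => aemeasurable_qinv_cdf _)
      (fun _ => aemeasurable_qinv_cdf _),
    lintegral_ofReal_sum_abs_sub_rpow (by fun_prop) (by fun_prop)]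
  refine Finset.sum_le_sum fun i _ => ?_
  have := isProbabilityMeasure_map_eval (μ := μ) i
  have := isProbabilityMeasure_map_eval (μ := ν) i
  have hπi := hπ.map_prodMap (measurable_pi_apply i)
  rw [← map_qinv_cdf (μ.map (Function.eval i)), ← map_qinv_cdf (ν.map (Function.eval i))] at hπi
  refine (lintegral_abs_sub_rpow_comonotone_le hp (ae_restrict_mem measurableSet_Ioo)
    (aemeasurable_qinv_cdf _) (aemeasurable_qinv_cdf _) (monotoneOn_qinv_cdf _)
    (monotoneOn_qinv_cdf _) hπi).trans_eq ?_
  rw [lintegral_map (by fun_prop) (by fun_prop)]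
  rfl

lemma IsCopulaLaw.lintegral_quantileMap {C : (Fin d → ℝ) → ℝ} {P : Measure (Fin d → I)}
    (hP : IsCopulaLaw C P) (hC : IsCopula d C) (p : ℝ) (μ ν : Measure (Fin d → ℝ)) :
    ∫⁻ u, ENNReal.ofReal (∑ i, |quantileMap μ u i - quantileMap ν u i| ^ p) ∂P
      = ∫⁻ u in Ioo (0 : ℝ) 1, ENNReal.ofReal (∑ i, |qinv (cdf (μ.map (Function.eval i))) u
        - qinv (cdf (ν.map (Function.eval i))) u| ^ p) := by
  rw [lintegral_ofReal_sum_abs_sub_rpow (aemeasurable_pi_iff.1 (hP.aemeasurable_quantileMap hC μ))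
      (aemeasurable_pi_iff.1 (hP.aemeasurable_quantileMap hC ν)),
    lintegral_ofReal_sum_abs_sub_rpow (fun _ => aemeasurable_qinv_cdf _)
      (fun _ => aemeasurable_qinv_cdf _)]
  refine Finset.sum_congr rfl fun i _ => ?_
  have hμ := aemeasurable_qinv_cdf (μ.map (Function.eval i))
  have hν := aemeasurable_qinv_cdf (ν.map (Function.eval i))
  have hmarg := hP.measurePreserving_coe_eval hC i
  rw [← hmarg.map_eq] at hμ hν ⊢
  rw [lintegral_map' (by fun_prop) hmarg.aemeasurable]
  rfl

lemma HasCopula.isCoupling_quantileMap {C : (Fin d → ℝ) → ℝ} {P : Measure (Fin d → I)}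
    [IsFiniteMeasure μ] [IsFiniteMeasure ν] (hμ : HasCopula μ C) (hν : HasCopula ν C)
    (hP : IsCopulaLaw C P) (hC : IsCopula d C) :
    IsCoupling (P.map fun u => (quantileMap μ u, quantileMap ν u)) μ ν := by
  have hμm := hP.aemeasurable_quantileMap hC μ
  have hνm := hP.aemeasurable_quantileMap hC ν
  refine ⟨?_, ?_⟩
  · rw [AEMeasurable.map_map_of_aemeasurable measurable_fst.aemeasurable (hμm.prodMk hνm)]
    exact hμ.map_quantileMap hP hC
  · rw [AEMeasurable.map_map_of_aemeasurable measurable_snd.aemeasurable (hμm.prodMk hνm)]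
    exact hν.map_quantileMap hP hC

lemma WpPowD_eq_lintegral_qinv_cdf [IsProbabilityMeasure μ] [IsProbabilityMeasure ν]
    {C : (Fin d → ℝ) → ℝ} (hd : d ≠ 0) (hp : 1 ≤ p) (hC : IsCopula d C) (hμ : HasCopula μ C)
    (hν : HasCopula ν C) :
    WpPowD d p μ ν
      = ∫⁻ u in Ioo (0 : ℝ) 1, ENNReal.ofReal (∑ i, |qinv (cdf (μ.map (Function.eval i))) u
        - qinv (cdf (ν.map (Function.eval i))) u| ^ p) := by
  obtain ⟨P, hP⟩ := hC.exists_isCopulaLaw hd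
  refine le_antisymm ?_ (le_iInf₂ fun π hπ => lintegral_sum_abs_sub_qinv_rpow_le hp hπ)
  let π := P.map fun u => (quantileMap μ u, quantileMap ν u)
  have hπ : IsCoupling π μ ν := hμ.isCoupling_quantileMap hν hP hC
  calc WpPowD d p μ ν ≤ ∫⁻ z, ENNReal.ofReal (∑ i, |z.1 i - z.2 i| ^ p) ∂π := iInf₂_le π hπ
    _ = ∫⁻ u, ENNReal.ofReal (∑ i, |quantileMap μ u i - quantileMap ν u i| ^ p) ∂P :=
        lintegral_map' (by fun_prop)
          ((hP.aemeasurable_quantileMap hC μ).prodMk (hP.aemeasurable_quantileMap hC ν))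
    _ = _ := hP.lintegral_quantileMap hC p μ ν

end Cost

lemma eq_cdf_map_eval {d : ℕ} {μ : Measure (Fin d → ℝ)} [IsProbabilityMeasure μ]
    {F : Fin d → ℝ → ℝ} (hF : ∀ i t, F i t = (μ {x | x i ≤ t}).toReal) :
    F = fun i => ⇑(cdf (μ.map (Function.eval i))) := by
  ext i t
  have := isProbabilityMeasure_map_eval (μ := μ) i
  rw [hF, cdf_eq_real, measureReal_def,
    Measure.map_apply (measurable_pi_apply i) measurableSet_Iic]
  rfl

theorem wasserstein_shared_copula_general (d : ℕ) (hd : d ≠ 0) (p : ℝ) (hp : 1 ≤ p)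
    (μ ν : Measure (Fin d → ℝ)) [IsProbabilityMeasure μ] [IsProbabilityMeasure ν]
    (F G : Fin d → ℝ → ℝ)
    (hF : ∀ i t, F i t = (μ {x | x i ≤ t}).toReal)
    (hG : ∀ i t, G i t = (ν {x | x i ≤ t}).toReal)
    (C : (Fin d → ℝ) → ℝ) (hC : IsCopula d C)
    (hμC : ∀ x : Fin d → ℝ, (μ {y | ∀ i, y i ≤ x i}).toReal = C (fun i => F i (x i)))
    (hνC : ∀ y : Fin d → ℝ, (ν {z | ∀ i, z i ≤ y i}).toReal = C (fun i => G i (y i))) :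
    WpPowD d p μ ν
      = ∫⁻ u in Ioo (0 : ℝ) 1,
          ENNReal.ofReal (∑ i, |qinv (F i) u - qinv (G i) u| ^ p) := by
  obtain rfl := eq_cdf_map_eval hF
  obtain rfl := eq_cdf_map_eval hG
  exact WpPowD_eq_lintegral_qinv_cdf hd hp hC hμC hνC

/-- if `μ, ν` on `ℝ^d` share the same copula `C`, then (with the `p`-norm)
`W_p(μ,ν)^p = ∫₀¹ ∑ i |F_i⁻¹(u) - G_i⁻¹(u)|^p du`. -/
theorem wasserstein_shared_copula (d : ℕ) (hd : 1 < d) (p : ℝ) (hp : 1 ≤ p)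
    (μ ν : MeasureTheory.Measure (Fin d → ℝ)) [IsProbabilityMeasure μ] [IsProbabilityMeasure ν]
    (hμmom : ∫⁻ x, ENNReal.ofReal (∑ i, |x i| ^ p) ∂μ ≠ ⊤)
    (hνmom : ∫⁻ x, ENNReal.ofReal (∑ i, |x i| ^ p) ∂ν ≠ ⊤)
    (F G : Fin d → ℝ → ℝ)
    (hF : ∀ i t, F i t = (μ {x | x i ≤ t}).toReal)
    (hG : ∀ i t, G i t = (ν {x | x i ≤ t}).toReal)
    (C : (Fin d → ℝ) → ℝ) (hC : IsCopula d C)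
    (hμC : ∀ x : Fin d → ℝ, (μ {y | ∀ i, y i ≤ x i}).toReal = C (fun i => F i (x i)))
    (hνC : ∀ y : Fin d → ℝ, (ν {z | ∀ i, z i ≤ y i}).toReal = C (fun i => G i (y i))) :
    WpPowD d p μ ν
      = ∫⁻ u in Ioo (0:ℝ) 1,
          ENNReal.ofReal (∑ i, |qinv (F i) u - qinv (G i) u| ^ p) := by
  exact wasserstein_shared_copula_general d (by lia) p hp μ ν F G hF hG C hC hμC hνC
end

section
/- Let d > 1 and let μ, ν be probability measures on ℝ^d whose joint distribution functions are H_μ(x₁,…,x_d) = min{F₁(x₁),…,F_d(x_d)} and H_ν(y₁,…,y_d) = min{G₁(y₁),…,G_d(y_d)}, where F_i and G_i are the marginal distribution functions of μ and ν. Then there exists a coupling π of μ and ν whose joint distribution function on ℝ^{2d} is H(x₁,…,x_d,y₁,…,y_d) = min{F₁(x₁),…,F_d(x_d),G₁(y₁),…,G_d(y_d)}. -/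
open MeasureTheory ENNReal Set

/-!
A measure with distribution function `min_i F i (x i)` is driven by a single uniform variable `U`
on `(0, 1)`: the quantile functions `q i` of its marginals satisfy the Galois relation
`q i u ≤ t ↔ u ≤ F i t`, so the vector `(q i U)_i` has distribution function
`P(U ≤ min_i F i (x i)) = min_i F i (x i)`, and a measure on `ℝ^d` is determined by its
distribution function. The coupling drives the quantile functions of all `2d` marginals by the same
`U`: its distribution function is the minimum of all the `F i (x i)` and `G i (y i)`, and forgetting
half of the coordinates gives back `μ` and `ν`.
-/

open Filter ProbabilityTheory

section Order

variable {ι κ α : Type*}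

lemma sumPiEquivProdPi_preimage_Iic_prod_Iic [Preorder α] (x : ι → α) (y : κ → α) :
    Equiv.sumPiEquivProdPi (fun _ : ι ⊕ κ => α) ⁻¹' (Iic x ×ˢ Iic y) = Iic (Sum.elim x y) := by
  ext z
  exact (Sum.forall (p := fun k => z k ≤ Sum.elim x y k)).symm

lemma ciInf_sum [ConditionallyCompleteLattice α] [Nonempty ι] [Nonempty κ] {f : ι ⊕ κ → α}
    (hf : BddBelow (range f)) :
    ⨅ k, f k = (⨅ i, f (.inl i)) ⊓ ⨅ j, f (.inr j) := by
  have hl : BddBelow (range fun i => f (.inl i)) := hf.mono (range_comp_subset_range Sum.inl f)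
  have hr : BddBelow (range fun j => f (.inr j)) := hf.mono (range_comp_subset_range Sum.inr f)
  refine eq_of_forall_le_iff fun c => ?_
  rw [le_inf_iff, le_ciInf_iff hf, le_ciInf_iff hl, le_ciInf_iff hr, Sum.forall]

end Order

lemma measure_pi_ext_of_Iic {ι : Type*} [Finite ι] {α : ι → Type*}
    [∀ i, TopologicalSpace (α i)] [∀ i, SecondCountableTopology (α i)] [∀ i, LinearOrder (α i)]
    [∀ i, OrderTopology (α i)] [∀ i, MeasurableSpace (α i)] [∀ i, BorelSpace (α i)]
    (μ ν : Measure (∀ i, α i)) [IsFiniteMeasure μ] (h : ∀ x, μ (Iic x) = ν (Iic x)) : μ = ν := by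
  rcases isEmpty_or_nonempty (∀ i, α i) with _ | hne
  · rw [μ.eq_zero_of_isEmpty, ν.eq_zero_of_isEmpty]
  have : ∀ i, Nonempty (α i) := Classical.nonempty_pi.1 hne
  choose u hu using fun i => exists_seq_tendsto (atTop : Filter (α i))
  refine Measure.ext_of_generateFrom_of_iUnion
    (pi univ '' pi univ fun i => range (Iic : α i → Set (α i))) (fun n => Iic fun i => u i n)
    (generateFrom_eq_pi (fun i => ?_) fun i => ?_).symm
    (IsPiSystem.pi fun _ => isPiSystem_Iic) ?_ (fun n => ?_) (fun n => measure_ne_top μ _) ?_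
  · rw [BorelSpace.measurable_eq (α := α i), borel_eq_generateFrom_Iic]
  · exact ⟨fun n => Iic (u i n), fun n => ⟨_, rfl⟩,
      iUnion_eq_univ_iff.2 fun t => ((hu i).eventually_ge_atTop t).exists⟩
  · exact iUnion_eq_univ_iff.2 fun x =>
      (eventually_all.2 fun i => (hu i).eventually_ge_atTop (x i)).exists
  · exact ⟨fun i => Iic (u i n), fun i _ => ⟨_, rfl⟩, pi_univ_Iic _⟩
  · rintro _ ⟨s, hs, rfl⟩
    choose x hx using fun i => hs i (mem_univ i)
    rw [← funext hx, pi_univ_Iic, h]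

section Quantile

/-- The quantile function of `ρ`, that is, the generalized inverse of its distribution function.
Its values outside `(0, 1)` are junk. -/
noncomputable def quantile (ρ : Measure ℝ) (u : ℝ) : ℝ :=
  sInf {t | u ≤ cdf ρ t}

variable (ρ : Measure ℝ)

lemma quantile_le_iff {u : ℝ} (hu : u ∈ Ioo (0 : ℝ) 1) (t : ℝ) :
    quantile ρ u ≤ t ↔ u ≤ cdf ρ t := by
  have hne : {t | u ≤ cdf ρ t}.Nonempty := by
    obtain ⟨s, hs⟩ := ((tendsto_cdf_atTop ρ).eventually_const_lt hu.2).exists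
    exact ⟨s, hs.le⟩
  have hbdd : BddBelow {t | u ≤ cdf ρ t} := by
    obtain ⟨s, hs⟩ := ((tendsto_cdf_atBot ρ).eventually_lt_const hu.1).exists
    exact ⟨s, fun r hr => ((monotone_cdf ρ).reflect_lt (hs.trans_le hr)).le⟩
  refine ⟨fun h => ?_, fun h => csInf_le hbdd h⟩
  have right_cont : Tendsto (cdf ρ) (nhdsWithin t (Ioi t)) (nhds (cdf ρ t)) :=
    continuousWithinAt_Ioi_iff_Ici.2 ((cdf ρ).right_continuous t)
  refine ge_of_tendsto right_cont (eventually_nhdsWithin_of_forall fun s hs => ?_)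
  obtain ⟨r, hr, hrs⟩ := exists_lt_of_csInf_lt hne (h.trans_lt hs)
  exact le_trans hr (monotone_cdf ρ hrs.le)

lemma monotoneOn_quantile : MonotoneOn (quantile ρ) (Ioo 0 1) := fun _u hu _v hv huv =>
  (quantile_le_iff ρ hu _).2 (huv.trans ((quantile_le_iff ρ hv _).1 le_rfl))

lemma aemeasurable_quantile : AEMeasurable (quantile ρ) (volume.restrict (Ioo 0 1)) :=
  aemeasurable_restrict_of_monotoneOn measurableSet_Ioo (monotoneOn_quantile ρ)

end Quantile

lemma volume_restrict_Ioo_real_Iic {c : ℝ} (hc : c ∈ Icc (0 : ℝ) 1) :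
    (volume.restrict (Ioo (0 : ℝ) 1)).real (Iic c) = c := by
  rw [Measure.restrict_congr_set Ioo_ae_eq_Ioc, measureReal_restrict_apply measurableSet_Iic,
    inter_comm, Ioc_inter_Iic, min_eq_right hc.2, Real.volume_real_Ioc_of_le hc.1, sub_zero]

section ComonotoneMeasure

variable {ι κ : Type*}

/-- The comonotone measure with marginals `ρ i`: the law of the vector of quantile functions of
the `ρ i`, all evaluated at one uniform random variable on `(0, 1)`. Its distribution function is
the upper Fréchet–Hoeffding bound. -/
noncomputable def comonotoneMeasure (ρ : ι → Measure ℝ) : Measure (ι → ℝ) :=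
  (volume.restrict (Ioo 0 1)).map fun u i => quantile (ρ i) u

variable (ρ : ι → Measure ℝ)

lemma bddBelow_range_cdf (x : ι → ℝ) : BddBelow (range fun i => cdf (ρ i) (x i)) :=
  ⟨0, forall_mem_range.2 fun i => cdf_nonneg (ρ i) (x i)⟩

lemma quantile_pi_le_iff [Nonempty ι] {u : ℝ} (hu : u ∈ Ioo (0 : ℝ) 1) (x : ι → ℝ) :
    (fun i => quantile (ρ i) u) ≤ x ↔ u ≤ ⨅ i, cdf (ρ i) (x i) := by
  simp only [Pi.le_def, quantile_le_iff _ hu, le_ciInf_iff (bddBelow_range_cdf ρ x)]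

variable [Countable ι]

lemma aemeasurable_quantile_pi :
    AEMeasurable (fun u i => quantile (ρ i) u) (volume.restrict (Ioo 0 1)) :=
  aemeasurable_pi_lambda _ fun i => aemeasurable_quantile (ρ i)

instance isProbabilityMeasure_comonotoneMeasure :
    IsProbabilityMeasure (comonotoneMeasure ρ) := by
  have : IsProbabilityMeasure (volume.restrict (Ioo (0 : ℝ) 1)) := ⟨by simp⟩
  exact Measure.isProbabilityMeasure_map (aemeasurable_quantile_pi ρ)

lemma map_comp_comonotoneMeasure (f : κ → ι) :
    (comonotoneMeasure ρ).map (fun z k => z (f k)) = comonotoneMeasure fun k => ρ (f k) :=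
  AEMeasurable.map_map_of_aemeasurable
    (measurable_pi_lambda _ fun k => measurable_pi_apply (f k)).aemeasurable
    (aemeasurable_quantile_pi ρ)

variable [Nonempty ι]

lemma comonotoneMeasure_real_Iic (x : ι → ℝ) :
    (comonotoneMeasure ρ).real (Iic x) = ⨅ i, cdf (ρ i) (x i) := by
  have hmem : ⨅ i, cdf (ρ i) (x i) ∈ Icc (0 : ℝ) 1 :=
    ⟨le_ciInf fun i => cdf_nonneg _ _,
      ciInf_le_of_le (bddBelow_range_cdf ρ x) (Classical.arbitrary ι) (cdf_le_one _ _)⟩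
  rw [comonotoneMeasure, map_measureReal_apply_of_aemeasurable (aemeasurable_quantile_pi ρ)
    measurableSet_Iic, ← volume_restrict_Ioo_real_Iic hmem]
  refine measureReal_congr ?_
  filter_upwards [ae_restrict_mem measurableSet_Ioo] with u hu
  exact propext (quantile_pi_le_iff ρ hu x)

end ComonotoneMeasure

lemma eq_comonotoneMeasure {ι : Type*} [Finite ι] [Nonempty ι] {ρ : ι → Measure ℝ}
    {μ : Measure (ι → ℝ)} [IsFiniteMeasure μ] (h : ∀ x, μ.real (Iic x) = ⨅ i, cdf (ρ i) (x i)) :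
    μ = comonotoneMeasure ρ :=
  measure_pi_ext_of_Iic _ _ fun x => by
    rw [← measureReal_eq_measureReal_iff, h, comonotoneMeasure_real_Iic]

section Coupling

variable {ι κ : Type*}

/-- The comonotone coupling of two comonotone measures: the comonotone measure with marginals `ρ i`
and `σ j`, with its coordinates split into the two blocks `ι` and `κ`. -/
noncomputable def comonotoneCoupling (ρ : ι → Measure ℝ) (σ : κ → Measure ℝ) :
    Measure ((ι → ℝ) × (κ → ℝ)) :=
  (comonotoneMeasure (Sum.elim ρ σ)).map (MeasurableEquiv.sumPiEquivProdPi fun _ => ℝ)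

variable [Countable ι] [Countable κ] (ρ : ι → Measure ℝ) (σ : κ → Measure ℝ)

lemma fst_comonotoneCoupling : (comonotoneCoupling ρ σ).fst = comonotoneMeasure ρ := by
  rw [Measure.fst, comonotoneCoupling,
    Measure.map_map measurable_fst (MeasurableEquiv.measurable _)]
  exact map_comp_comonotoneMeasure (Sum.elim ρ σ) Sum.inl

lemma snd_comonotoneCoupling : (comonotoneCoupling ρ σ).snd = comonotoneMeasure σ := by
  rw [Measure.snd, comonotoneCoupling,
    Measure.map_map measurable_snd (MeasurableEquiv.measurable _)]
  exact map_comp_comonotoneMeasure (Sum.elim ρ σ) Sum.inr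

lemma comonotoneCoupling_real_Iic_prod_Iic [Nonempty ι] [Nonempty κ] (x : ι → ℝ) (y : κ → ℝ) :
    (comonotoneCoupling ρ σ).real (Iic x ×ˢ Iic y)
      = min (⨅ i, cdf (ρ i) (x i)) (⨅ j, cdf (σ j) (y j)) := by
  rw [comonotoneCoupling, map_measureReal_apply (MeasurableEquiv.measurable _)
    (measurableSet_Iic.prod measurableSet_Iic), MeasurableEquiv.coe_sumPiEquivProdPi,
    sumPiEquivProdPi_preimage_Iic_prod_Iic, comonotoneMeasure_real_Iic,
    ciInf_sum (bddBelow_range_cdf _ _)]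
  rfl

end Coupling

lemma cdf_map_eval {ι : Type*} (μ : Measure (ι → ℝ)) [IsProbabilityMeasure μ] (i : ι) (t : ℝ) :
    cdf (μ.map (Function.eval i)) t = μ.real {x | x i ≤ t} := by
  have := Measure.isProbabilityMeasure_map (μ := μ) (measurable_pi_apply i).aemeasurable
  rw [cdf_eq_real, map_measureReal_apply (measurable_pi_apply i) measurableSet_Iic]
  rfl

theorem exists_comonotone_coupling_general {ι κ : Type*} [Finite ι] [Finite κ]
    [Nonempty ι] [Nonempty κ] (μ : Measure (ι → ℝ)) (ν : Measure (κ → ℝ))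
    [IsProbabilityMeasure μ] [IsProbabilityMeasure ν] (F : ι → ℝ → ℝ) (G : κ → ℝ → ℝ)
    (hF : ∀ i t, F i t = μ.real {x | x i ≤ t})
    (hG : ∀ j t, G j t = ν.real {y | y j ≤ t})
    (hμ : ∀ x, μ.real (Iic x) = ⨅ i, F i (x i))
    (hν : ∀ y, ν.real (Iic y) = ⨅ j, G j (y j)) :
    ∃ π : Measure ((ι → ℝ) × (κ → ℝ)), (π.fst = μ ∧ π.snd = ν) ∧
      ∀ x y, π.real (Iic x ×ˢ Iic y) = min (⨅ i, F i (x i)) (⨅ j, G j (y j)) := by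
  obtain rfl : F = fun i t => cdf (μ.map (Function.eval i)) t :=
    funext₂ fun i t => (hF i t).trans (cdf_map_eval μ i t).symm
  obtain rfl : G = fun j t => cdf (ν.map (Function.eval j)) t :=
    funext₂ fun j t => (hG j t).trans (cdf_map_eval ν j t).symm
  refine ⟨comonotoneCoupling (fun i => μ.map (Function.eval i)) fun j => ν.map (Function.eval j),
    ⟨?_, ?_⟩, fun x y => ?_⟩
  · rw [fst_comonotoneCoupling]
    exact (eq_comonotoneMeasure hμ).symm
  · rw [snd_comonotoneCoupling]
    exact (eq_comonotoneMeasure hν).symm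
  · rw [comonotoneCoupling_real_Iic_prod_Iic]

/-- if `μ, ν` on `ℝ^d` have comonotone joint distribution functions
`H_μ(x) = min_i F_i(x_i)` and `H_ν(y) = min_i G_i(y_i)`, then there exists a coupling
`π` of `μ` and `ν` whose joint distribution function on `ℝ^{2d}` is
`min {F₁(x₁), …, F_d(x_d), G₁(y₁), …, G_d(y_d)}`. -/
theorem exists_comonotone_coupling (d : ℕ) (hd : 1 < d)
    (μ ν : MeasureTheory.Measure (Fin d → ℝ)) [IsProbabilityMeasure μ] [IsProbabilityMeasure ν]
    (F G : Fin d → ℝ → ℝ)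
    (hF : ∀ i t, F i t = (μ {x | x i ≤ t}).toReal)
    (hG : ∀ i t, G i t = (ν {x | x i ≤ t}).toReal)
    (hμM : ∀ x : Fin d → ℝ, (μ {y | ∀ i, y i ≤ x i}).toReal = ⨅ i, F i (x i))
    (hνM : ∀ y : Fin d → ℝ, (ν {z | ∀ i, z i ≤ y i}).toReal = ⨅ i, G i (y i)) :
    ∃ π : MeasureTheory.Measure ((Fin d → ℝ) × (Fin d → ℝ)), IsCoupling π μ ν ∧
      ∀ x y : Fin d → ℝ,
        (π ({a | ∀ i, a i ≤ x i} ×ˢ {b | ∀ i, b i ≤ y i})).toReal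
          = min (⨅ i, F i (x i)) (⨅ i, G i (y i)) := by
  have : Nonempty (Fin d) := ⟨⟨0, by omega⟩⟩
  exact exists_comonotone_coupling_general μ ν F G hF hG hμM hνM
end
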